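/- Suppose 0 ≤ ℓ(w, s i) ≤ B for all w ∈ 𝒲 and all i, and suppose P_{W,Z} ≪ P_W ⊗ P_Z. Then E_{(W,Z)}[ (R_test(W,Z) − R_train(W,Z))² ] ≤ B² · C_{m,u} · (I(W;Z) + log 3) · (m+u) / (m·u). -/

import Mathlib

/-!
For a fixed parameter `w`, let `g` be the gap between test and training error under a uniformly
random permutation, and let `n = m + u`. The argument has three ingredients.

* **Sub-Gaussianity of `g`.** Revealing the permutation one entry at a time (Doob martingale) and
  applying Hoeffding's lemma to each draw gives `E exp (t g) ≤ exp (t² σ² / 2)`, where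
  `σ² = B² n² / (4 m²) * ∑ 1 / j²` over `u ≤ j < n` (`sum_perm_exp_le`, `sum_perm_exp_gap_le`).
  A telescoping estimate bounds `σ²` by `16 / 9` times `B² C_{m,u} n / (4 m u)` (`permVar_le_Cmu`).
* **Square moment.** With `c = m u / (B² C_{m,u} n)`, so that `c σ² ≤ 4 / 9`, writing `exp (c g²)`
  as a Gaussian average of `exp (√(2c) g y)` gives `E exp (c g²) ≤ (1 - 8/9)^(-1/2) = 3`
  (`sum_exp_sq_le`).
* **Change of measure.** The Donsker–Varadhan inequality (`donsker_varadhan`) applied to `c g²`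
  yields `c E[g²] ≤ I(W;Z) + log 3`. It needs the log-likelihood ratio to be integrable, so that
  the mutual information is not a junk value; this holds because `Z` takes finitely many values,
  each with probability `1 / n!`, and hence the density is at most `n!`
  (`joint_le_smul_prod`, `integrable_llr_of_le_smul`).
-/


open MeasureTheory ProbabilityTheory Real

noncomputable section

/-- The constant `C_{m,u} = 2(m+u)·max(m,u)/((m+u−1/2)·(2·max(m,u)−1))`. -/
def Cmu (m u : ℕ) : ℝ :=
  2 * ((m : ℝ) + u) * max (m : ℝ) u / ((((m : ℝ) + u) - 1/2) * (2 * max (m : ℝ) u - 1))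

/-- Transductive training error: average loss over the first `m` indices of the
sampling sequence `z`. -/
def Rtrain {S W : Type*} (m u : ℕ) (s : Fin (m + u) → S) (ℓ : W → S → ℝ)
    (w : W) (z : Fin (m + u) → Fin (m + u)) : ℝ :=
  (∑ i : Fin (m + u), if (i : ℕ) < m then ℓ w (s (z i)) else 0) / m

/-- Transductive test error: average loss over the last `u` indices of the
sampling sequence `z`. -/
def Rtest {S W : Type*} (m u : ℕ) (s : Fin (m + u) → S) (ℓ : W → S → ℝ)
    (w : W) (z : Fin (m + u) → Fin (m + u)) : ℝ :=
  (∑ i : Fin (m + u), if m ≤ (i : ℕ) then ℓ w (s (z i)) else 0) / u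

instance (n : ℕ) : MeasurableSpace (Equiv.Perm (Fin n)) := ⊤

/-- The uniform distribution on the symmetric group of `Fin n` (sampling without
replacement). -/
def uniformPerm (n : ℕ) : Measure (Equiv.Perm (Fin n)) :=
  letI : Nonempty (Equiv.Perm (Fin n)) := ⟨1⟩
  (PMF.uniformOfFintype (Equiv.Perm (Fin n))).toMeasure

/-- Kullback–Leibler divergence `D_KL(μ ‖ ν) = ∫ log(dμ/dν) dμ`. -/
def klDivR {α : Type*} [MeasurableSpace α] (μ ν : Measure α) : ℝ :=
  ∫ x, llr μ ν x ∂μ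

/-- Mutual information `I(X;Y) = D_KL(P_{X,Y} ‖ P_X ⊗ P_Y)`. -/
def mutInfo {Ω α β : Type*} [MeasurableSpace Ω] [MeasurableSpace α] [MeasurableSpace β]
    (μ : Measure Ω) (X : Ω → α) (Y : Ω → β) : ℝ :=
  klDivR (Measure.map (fun ω => (X ω, Y ω)) μ) ((Measure.map X μ).prod (Measure.map Y μ))

/-! ### Sampling without replacement -/

/-- Variance proxy, in units of `B² / 4`, of the sum of `k` draws without replacement from a
population of `k + u` numbers in `[0, B]`. The `j`-th summand comes from a draw out of a population
of size `u + j + 1`: it moves the conditional mean of the final sum by at most `B u / (u + j)`. -/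
def permVar (u k : ℕ) : ℝ := ∑ j ∈ Finset.range k, ((u : ℝ) / ((u : ℝ) + j)) ^ 2

lemma permVar_nonneg (u k : ℕ) : 0 ≤ permVar u k :=
  Finset.sum_nonneg fun _ _ => sq_nonneg _

/-- Hoeffding's lemma for the uniform distribution on a finite set. -/
lemma hoeffding_uniform {ι : Type*} [Fintype ι] [Nonempty ι] (a : ι → ℝ) (B : ℝ)
    (ha : ∀ i, 0 ≤ a i ∧ a i ≤ B) (t : ℝ) :
    ∑ i, exp (t * a i) ≤
      Fintype.card ι * exp (t * (∑ i, a i) / Fintype.card ι + t ^ 2 * B ^ 2 / 8) := by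
  let : MeasurableSpace ι := ⊤
  have : MeasurableSingletonClass ι := ⟨fun _ => trivial⟩
  set P : Measure ι := (PMF.uniformOfFintype ι).toMeasure with hP
  have hcard : (0 : ℝ) < Fintype.card ι := by exact_mod_cast Fintype.card_pos
  have hreal : ∀ i, P.real {i} = (Fintype.card ι : ℝ)⁻¹ := fun i => by
    rw [Measure.real, hP, PMF.toMeasure_apply_singleton _ _ (measurableSet_singleton i)]
    simp
  have hint : ∀ f : ι → ℝ, ∫ i, f i ∂P = (∑ i, f i) / Fintype.card ι := fun f => by
    rw [integral_fintype .of_finite]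
    simp only [hreal, smul_eq_mul, ← Finset.mul_sum]
    ring
  have hH := (hasSubgaussianMGF_of_mem_Icc (μ := P) (X := a) (a := 0) (b := B)
    (measurable_from_top.aemeasurable) (ae_of_all _ fun i => ha i)).mgf_le t
  rw [mgf, hint, hint] at hH
  have h2 : ∀ i, exp (t * a i) =
      exp (t * (∑ i, a i) / Fintype.card ι) * exp (t * (a i - (∑ i, a i) / Fintype.card ι)) :=
    fun i => by rw [← exp_add]; congr 1; ring
  rw [div_le_iff₀ hcard] at hH
  simp_rw [h2]
  rw [← Finset.mul_sum, exp_add]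
  calc _ ≤ exp (t * (∑ i, a i) / Fintype.card ι) * _ :=
        mul_le_mul_of_nonneg_left hH (exp_pos _).le
    _ = _ := by
        have : ((((‖B - 0‖₊ / 2) ^ 2 : NNReal) : ℝ)) * t ^ 2 / 2 = t ^ 2 * B ^ 2 / 8 := by
          push_cast
          simp only [sub_zero, norm_eq_abs, div_pow, sq_abs]
          ring
        rw [this]; ring

/-- Moment generating function of the sum of the first `k` entries of a uniformly random
arrangement of `k + u` numbers in `[0, B]`. The step from `k` to `k + 1` reveals the first entry
`p`; given `p`, the rest is a uniformly random arrangement of the remaining `k + u` numbers, and the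
conditional mean of the sum depends on `p` only through `a p * u / (k + u)`. -/
lemma sum_perm_exp_le (u : ℕ) (hu : 1 ≤ u) (B : ℝ) (t : ℝ) (k : ℕ) :
    ∀ (n : ℕ), n = k + u → ∀ a : Fin n → ℝ, (∀ i, 0 ≤ a i ∧ a i ≤ B) →
    ∑ z : Equiv.Perm (Fin n), exp (t * ∑ i : Fin n, if (i : ℕ) < k then a (z i) else 0) ≤
      (n.factorial : ℝ) *
        exp (t * (k * (∑ i, a i) / n) + t ^ 2 * B ^ 2 / 8 * permVar u k) := by
  induction k with
  | zero =>
    intro n hn a ha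
    simp [permVar, Fintype.card_perm]
  | succ k ih =>
    intro n' hn' a ha
    obtain ⟨n, rfl⟩ : ∃ n, n' = n + 1 := ⟨k + u, by omega⟩
    have hn : n = k + u := by omega
    have hnpos : (0 : ℝ) < n := by exact_mod_cast (by omega : 0 < n)
    have hnr : (n : ℝ) = k + u := by exact_mod_cast hn
    set T := ∑ i, a i with hT
    rw [← Equiv.sum_comp Equiv.Perm.decomposeFin.symm, Fintype.sum_prod_type]
    have hinner : ∀ p : Fin (n + 1), ∑ e : Equiv.Perm (Fin n),
        exp (t * ∑ i : Fin (n + 1),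
          if (i : ℕ) < k + 1 then a (Equiv.Perm.decomposeFin.symm (p, e) i) else 0) ≤
        (n.factorial : ℝ) * exp (t * (k * T / n) + t ^ 2 * B ^ 2 / 8 * permVar u k)
          * exp ((t * (u / n)) * a p) := by
      intro p
      set a' : Fin n → ℝ := fun i => a (Equiv.swap 0 p i.succ) with ha'
      have hsum : ∑ i, a' i = T - a p := by
        have h1 : T = ∑ i, a (Equiv.swap 0 p i) := (Equiv.sum_comp (Equiv.swap 0 p) a).symm
        rw [h1, Fin.sum_univ_succ, Equiv.swap_apply_left]
        ring
      have h := ih n hn a' (fun i => ha _)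
      rw [hsum] at h
      have hrew : ∀ e : Equiv.Perm (Fin n), (∑ i : Fin (n + 1),
          if (i : ℕ) < k + 1 then a (Equiv.Perm.decomposeFin.symm (p, e) i) else 0) =
          a p + ∑ i : Fin n, if (i : ℕ) < k then a' (e i) else 0 := by
        intro e
        rw [Fin.sum_univ_succ]
        simp [ha']
      simp_rw [hrew, mul_add, exp_add, ← Finset.mul_sum]
      refine (mul_le_mul_of_nonneg_left h (exp_pos _).le).trans (le_of_eq ?_)
      rw [mul_left_comm, mul_assoc, ← exp_add, ← exp_add, ← exp_add]
      congr 2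
      field_simp
      rw [hnr]
      ring
    refine (Finset.sum_le_sum fun p _ => hinner p).trans ?_
    rw [← Finset.mul_sum]
    refine (mul_le_mul_of_nonneg_left (hoeffding_uniform a B ha _) (by positivity)).trans
      (le_of_eq ?_)
    rw [Fintype.card_fin, Nat.factorial_succ, ← hT, permVar, permVar, Finset.sum_range_succ]
    push_cast
    rw [show ∀ x y z w : ℝ, x * y * (z * w) = z * x * (y * w) by intros; ring, ← exp_add]
    congr 2
    rw [show (u : ℝ) + k = n by rw [hnr]; ring]
    rw [mul_add (t ^ 2 * B ^ 2 / 8)]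
    have hu' : (u : ℝ) = n - k := by rw [hnr]; ring
    have e1 : t * (k * T / n) + t * (u / n) * T / (n + 1) = t * ((k + 1) * T / (n + 1)) := by
      rw [hu']; field_simp; ring
    rw [← e1]
    ring

/-- The telescoping bound `1 / j² ≤ 1 / (j - 1/2) - 1 / (j + 1/2)`, summed over `u ≤ j < u + k`. -/
lemma permVar_le (u : ℕ) (hu : 1 ≤ u) (k : ℕ) :
    permVar u k ≤ (u : ℝ) ^ 2 * (1 / (u - 1 / 2) - 1 / (u + k - 1 / 2)) := by
  have hu' : (1 : ℝ) ≤ u := by exact_mod_cast hu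
  induction k with
  | zero => simp [permVar]
  | succ k ih =>
    rw [permVar, Finset.sum_range_succ, ← permVar]
    have hx : (1 : ℝ) ≤ u + k := by have : (0 : ℝ) ≤ k := k.cast_nonneg; linarith
    have : ((u : ℝ) / (u + k)) ^ 2 ≤
        (u : ℝ) ^ 2 * (1 / (u + k - 1 / 2) - 1 / (u + k + 1 - 1 / 2)) := by
      generalize (u : ℝ) + k = x at hx
      rw [div_pow, div_eq_mul_inv]
      refine mul_le_mul_of_nonneg_left ?_ (sq_nonneg _)
      rw [div_sub_div _ _ (by linarith) (by linarith), ← one_div,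
        div_le_div_iff₀ (by positivity) (by nlinarith)]
      nlinarith
    push_cast
    rw [← add_assoc]
    linarith

/-- For `u = 1` the first term of the sum is kept exactly and only the rest is telescoped. -/
lemma permVar_one_le (k : ℕ) : permVar 1 (k + 1) ≤ 5 / 3 := by
  suffices h : permVar 1 (k + 1) ≤ 5 / 3 - 1 / (k + 3 / 2) from
    h.trans (sub_le_self _ (by positivity))
  induction k with
  | zero => norm_num [permVar]
  | succ k ih =>
    rw [permVar, Finset.sum_range_succ, ← permVar]
    have : (((1 : ℕ) : ℝ) / (((1 : ℕ) : ℝ) + ((k + 1 : ℕ) : ℝ))) ^ 2 ≤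
        1 / (k + 3 / 2) - 1 / (k + 1 + 3 / 2) := by
      have hk : (0 : ℝ) ≤ k := k.cast_nonneg
      push_cast
      rw [div_sub_div _ _ (by positivity) (by positivity), div_pow,
        div_le_div_iff₀ (by positivity) (by positivity)]
      nlinarith
    push_cast at this ⊢
    linarith

lemma Cmu_eq (m u : ℕ) (hm : 1 ≤ m) :
    Cmu m u = ((m : ℝ) + u) / (m + u - 1 / 2) * (max (m : ℝ) u / (max (m : ℝ) u - 1 / 2)) := by
  have hm' : (1 : ℝ) ≤ m := by exact_mod_cast hm
  have hM : (1 : ℝ) ≤ max (m : ℝ) u := le_max_of_le_left hm'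
  have hu : (0 : ℝ) ≤ u := u.cast_nonneg
  rw [Cmu, div_mul_div_comm, div_eq_div_iff (by nlinarith) (by nlinarith)]
  ring

lemma Cmu_ge (m u : ℕ) (hm : 1 ≤ m) :
    ((m : ℝ) + u) / (m + u - 1 / 2) ≤ Cmu m u := by
  have hm' : (1 : ℝ) ≤ m := by exact_mod_cast hm
  have hM : (1 : ℝ) ≤ max (m : ℝ) u := le_max_of_le_left hm'
  have hu : (0 : ℝ) ≤ u := u.cast_nonneg
  rw [Cmu_eq m u hm]
  refine le_mul_of_one_le_right (div_nonneg (by linarith) (by linarith)) ?_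
  rw [one_le_div (by linarith)]
  linarith

lemma Cmu_pos (m u : ℕ) (hm : 1 ≤ m) : 0 < Cmu m u := by
  have hm' : (1 : ℝ) ≤ m := by exact_mod_cast hm
  have hu : (0 : ℝ) ≤ u := u.cast_nonneg
  exact lt_of_lt_of_le (div_pos (by linarith) (by linarith)) (Cmu_ge m u hm)

/-- The variance proxy against the constant `C_{m,u}`. The factor `16 / 9` is exactly the room that
`log 3` leaves: `(1 - 2x)^(-1/2) ≤ 3` holds for `x ≤ 4 / 9 = (16 / 9) / 4`. It absorbs the
asymmetry between `m` and `u` in the telescoping bound. -/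
lemma permVar_le_Cmu (m u : ℕ) (hm : 1 ≤ m) (hu : 1 ≤ u) :
    permVar u m * (m + u) ≤ 16 / 9 * Cmu m u * (m * u) := by
  have hm' : (1 : ℝ) ≤ m := by exact_mod_cast hm
  rcases hu.eq_or_lt with rfl | hu2
  · obtain ⟨k, rfl⟩ : ∃ k, m = k + 1 := ⟨m - 1, by omega⟩
    have h := permVar_one_le k
    rw [Cmu_eq _ _ hm]
    simp only [Nat.cast_one]
    rw [max_eq_left hm']
    generalize ((k + 1 : ℕ) : ℝ) = x at hm'
    have h1 : x + 1 ≤ (x + 1) / (x + 1 - 1 / 2) * (x / (x - 1 / 2)) * (x * 1) := by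
      rw [div_mul_div_comm, div_mul_eq_mul_div, le_div_iff₀ (by nlinarith)]
      nlinarith
    nlinarith
  · have hu' : (2 : ℝ) ≤ u := by exact_mod_cast hu2
    have h := permVar_le u hu m
    have hC := Cmu_ge m u hm
    have h3 : (u : ℝ) ^ 2 * (1 / (u - 1 / 2) - 1 / (u + m - 1 / 2)) * (m + u) ≤
        16 / 9 * (((m : ℝ) + u) / (m + u - 1 / 2)) * (m * u) := by
      have e : (u : ℝ) ^ 2 * (1 / (u - 1 / 2) - 1 / (u + m - 1 / 2)) * (m + u) =
          u / (u - 1 / 2) * (((m : ℝ) + u) / (m + u - 1 / 2)) * (m * u) := by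
        have h1 : (u : ℝ) - 1 / 2 ≠ 0 := by linarith
        have h2 : (m : ℝ) + u - 1 / 2 ≠ 0 := by linarith
        rw [add_comm (u : ℝ) m, div_sub_div _ _ h1 h2, div_mul_div_comm]
        rw [mul_div_assoc', div_mul_eq_mul_div, div_mul_eq_mul_div]
        congr 1
        ring
      rw [e]
      have h4 : (u : ℝ) / (u - 1 / 2) ≤ 16 / 9 := by
        rw [div_le_iff₀ (by linarith)]; linarith
      have h5 : (0 : ℝ) ≤ ((m : ℝ) + u) / (m + u - 1 / 2) :=
        div_nonneg (by linarith) (by linarith)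
      gcongr
    calc _ ≤ _ := mul_le_mul_of_nonneg_right h (by linarith)
      _ ≤ _ := h3
      _ ≤ _ := by gcongr

/-- The gap between the mean of the last `u` and the mean of the first `m` entries of a uniformly
random arrangement is sub-Gaussian. -/
lemma sum_perm_exp_gap_le (m u : ℕ) (hm : 1 ≤ m) (hu : 1 ≤ u) (B : ℝ)
    (a : Fin (m + u) → ℝ) (ha : ∀ i, 0 ≤ a i ∧ a i ≤ B) (t : ℝ) :
    ∑ z : Equiv.Perm (Fin (m + u)),
      exp (t * ((∑ i : Fin (m + u), if m ≤ (i : ℕ) then a (z i) else 0) / u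
        - (∑ i : Fin (m + u), if (i : ℕ) < m then a (z i) else 0) / m)) ≤
      ((m + u).factorial : ℝ) *
        exp (t ^ 2 / 2 * (((m : ℝ) + u) ^ 2 / (m * u) ^ 2 * B ^ 2 / 4 * permVar u m)) := by
  have hm' : (0 : ℝ) < m := by exact_mod_cast hm
  have hu' : (0 : ℝ) < u := by exact_mod_cast hu
  set T := ∑ i, a i with hT
  have hz : ∀ z : Equiv.Perm (Fin (m + u)),
      t * ((∑ i : Fin (m + u), if m ≤ (i : ℕ) then a (z i) else 0) / u
        - (∑ i : Fin (m + u), if (i : ℕ) < m then a (z i) else 0) / m) =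
      t * T / u + (-(t * (m + u) / (m * u))) *
        (∑ i : Fin (m + u), if (i : ℕ) < m then a (z i) else 0) := by
    intro z
    have h1 : (∑ i : Fin (m + u), if m ≤ (i : ℕ) then a (z i) else 0) =
        T - ∑ i : Fin (m + u), if (i : ℕ) < m then a (z i) else 0 := by
      rw [hT, ← Equiv.sum_comp z a, ← Finset.sum_sub_distrib]
      refine Finset.sum_congr rfl fun i _ => ?_
      by_cases h : (i : ℕ) < m
      · simp [h]
      · simp [h, not_lt.mp h]
    rw [h1]
    field_simp
    ring
  simp_rw [hz, exp_add, ← Finset.mul_sum]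
  refine (mul_le_mul_of_nonneg_left (sum_perm_exp_le u hu B _ m _ rfl a ha)
    (exp_pos _).le).trans (le_of_eq ?_)
  rw [mul_left_comm, ← exp_add]
  congr 2
  push_cast
  field_simp
  ring

/-! ### From sub-Gaussianity to the exponential moment of the square -/

lemma integral_exp_sq_gaussian :
    Integrable (fun y : ℝ => exp (4 / 9 * y ^ 2)) (gaussianReal 0 1) ∧
      ∫ y, exp (4 / 9 * y ^ 2) ∂(gaussianReal 0 1) = 3 := by
  have hpdf : ∀ y : ℝ, gaussianPDFReal 0 1 y • exp (4 / 9 * y ^ 2) =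
      (√(2 * π))⁻¹ * exp (-(1 / 18) * y ^ 2) := by
    intro y
    simp only [gaussianPDFReal, smul_eq_mul, NNReal.coe_one, mul_one, sub_zero]
    rw [mul_assoc, ← exp_add]
    congr 2
    ring
  have hval : ∫ y, exp (4 / 9 * y ^ 2) ∂(gaussianReal 0 1) = 3 := by
    rw [integral_gaussianReal_eq_integral_smul one_ne_zero]
    simp_rw [hpdf]
    rw [integral_const_mul, integral_gaussian]
    rw [show π / (1 / 18) = 3 ^ 2 * (2 * π) by ring, sqrt_mul (sq_nonneg (3 : ℝ)),
      sqrt_sq (by norm_num)]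
    have : √(2 * π) ≠ 0 := by positivity
    field_simp
  refine ⟨?_, hval⟩
  by_contra h
  rw [integral_undef h] at hval
  norm_num at hval

/-- Gaussian linearisation: `exp (c x²)` is the average of `exp (√(2c) x y)` over a standard
Gaussian `y`, so a sub-Gaussian bound integrates to a bound on the exponential moment of the
square. -/
lemma sum_exp_sq_le {ι : Type*} [Fintype ι] (g : ι → ℝ) (N σ c : ℝ) (hN : 0 ≤ N) (hc : 0 ≤ c)
    (hcσ : c * σ ≤ 4 / 9) (hg : ∀ t, ∑ i, exp (t * g i) ≤ N * exp (t ^ 2 / 2 * σ)) :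
    ∑ i, exp (c * g i ^ 2) ≤ 3 * N := by
  have hlin : ∀ x : ℝ, exp (c * x ^ 2) = ∫ y, exp (√(2 * c) * x * y) ∂(gaussianReal 0 1) := by
    intro x
    have h := congrFun (mgf_id_gaussianReal (μ := 0) (v := 1)) (√(2 * c) * x)
    simp only [mgf, id] at h
    rw [h, mul_pow, sq_sqrt (by positivity)]
    congr 1
    push_cast
    ring
  simp_rw [hlin]
  rw [← integral_finsetSum _ fun i _ => integrable_exp_mul_gaussianReal _]
  have hle : ∀ y : ℝ, ∑ i, exp (√(2 * c) * g i * y) ≤ N * exp (4 / 9 * y ^ 2) := by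
    intro y
    have h := hg (√(2 * c) * y)
    simp_rw [show ∀ i, √(2 * c) * g i * y = √(2 * c) * y * g i from fun i => by ring]
    refine h.trans (mul_le_mul_of_nonneg_left (exp_le_exp.mpr ?_) hN)
    rw [mul_pow, sq_sqrt (by positivity)]
    nlinarith [sq_nonneg y]
  calc _ ≤ ∫ y, N * exp (4 / 9 * y ^ 2) ∂(gaussianReal 0 1) :=
        integral_mono (integrable_finsetSum _ fun i _ => integrable_exp_mul_gaussianReal _)
          (integral_exp_sq_gaussian.1.const_mul N) hle
    _ = 3 * N := by rw [integral_const_mul, integral_exp_sq_gaussian.2]; ring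

/-! ### Change of measure -/

instance (n : ℕ) : MeasurableSingletonClass (Equiv.Perm (Fin n)) := ⟨fun _ => trivial⟩

lemma uniformPerm_singleton (n : ℕ) (z : Equiv.Perm (Fin n)) :
    uniformPerm n {z} = (n.factorial : ENNReal)⁻¹ := by
  rw [uniformPerm, PMF.toMeasure_apply_singleton _ _ (measurableSet_singleton z)]
  simp [Fintype.card_perm]

/-- The log-likelihood ratio is integrable as soon as the density is bounded, since
`x ↦ x log x + 1 - x` is bounded on bounded intervals. -/
lemma integrable_llr_of_le_smul {α : Type*} [MeasurableSpace α] (P Q : Measure α)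
    [IsProbabilityMeasure P] [IsProbabilityMeasure Q] (hac : P ≪ Q) (c : ℕ)
    (hle : P ≤ (c : ENNReal) • Q) : Integrable (llr P Q) P := by
  rw [← InformationTheory.integrable_klFun_rnDeriv_iff hac]
  have hb : P.rnDeriv Q ≤ᵐ[Q] fun _ => (c : ENNReal) := by
    refine ae_le_of_forall_setLIntegral_le_of_sigmaFinite (P.measurable_rnDeriv Q) fun s _ _ => ?_
    refine (Measure.setLIntegral_rnDeriv_le s).trans ((hle s).trans ?_)
    simp
  obtain ⟨K, hK⟩ := (isCompact_Icc (a := (0 : ℝ)) (b := c)).exists_bound_of_continuousOn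
    InformationTheory.continuous_klFun.continuousOn
  refine Integrable.of_bound (C := K) (Measurable.aestronglyMeasurable (by fun_prop)) ?_
  filter_upwards [hb] with x hx
  refine hK _ ⟨ENNReal.toReal_nonneg, ?_⟩
  simpa using ENNReal.toReal_mono (by simp) hx

/-- The Donsker–Varadhan inequality, obtained from the nonnegativity of the divergence of `P`
from `Q` tilted by `f`. -/
lemma donsker_varadhan {α : Type*} [MeasurableSpace α] (P Q : Measure α)
    [IsProbabilityMeasure P] [IsProbabilityMeasure Q] (hac : P ≪ Q)
    (hllr : Integrable (llr P Q) P) (f : α → ℝ) (hfP : Integrable f P)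
    (hfQ : Integrable (fun x => exp (f x)) Q) :
    ∫ x, f x ∂P ≤ klDivR P Q + log (∫ x, exp (f x) ∂Q) := by
  have := isProbabilityMeasure_tilted hfQ
  have h := InformationTheory.integral_llr_add_sub_measure_univ_nonneg
    (hac.trans (absolutelyContinuous_tilted hfQ)) (integrable_llr_tilted_right hac hfP hllr hfQ)
  rw [integral_llr_tilted_right hac hfP hfQ hllr] at h
  simp only [probReal_univ] at h
  rw [klDivR]
  linarith

/-- The joint law has density at most `n!` with respect to the product law, because every value
of `Z` has probability `1 / n!`. -/
lemma joint_le_smul_prod {Ω 𝒲 : Type*} [MeasurableSpace Ω] [MeasurableSpace 𝒲] (n : ℕ)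
    (μ : Measure Ω) [IsProbabilityMeasure μ] (W : Ω → 𝒲) (Z : Ω → Equiv.Perm (Fin n))
    (hW : Measurable W) (hZ : Measurable Z) (hZunif : Measure.map Z μ = uniformPerm n) :
    Measure.map (fun ω => (W ω, Z ω)) μ ≤
      (n.factorial : ENNReal) • (Measure.map W μ).prod (Measure.map Z μ) := by
  have := Measure.isProbabilityMeasure_map (μ := μ) hW.aemeasurable
  have := Measure.isProbabilityMeasure_map (μ := μ) hZ.aemeasurable
  refine Measure.le_iff.mpr fun A hA => ?_
  have hsec : ∀ z : Equiv.Perm (Fin n), MeasurableSet ((fun w => (w, z)) ⁻¹' A) := fun z =>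
    measurable_prodMk_right hA
  rw [Measure.smul_apply, Measure.prod_apply_symm hA, lintegral_fintype, hZunif,
    Measure.map_apply (hW.prodMk hZ) hA]
  simp_rw [uniformPerm_singleton]
  rw [← Finset.sum_mul, smul_eq_mul, mul_left_comm, ENNReal.mul_inv_cancel (by positivity)
    (by simp), mul_one]
  calc μ ((fun ω => (W ω, Z ω)) ⁻¹' A) ≤ μ (⋃ z, W ⁻¹' ((fun w => (w, z)) ⁻¹' A)) :=
        measure_mono fun ω hω => Set.mem_iUnion.mpr ⟨Z ω, hω⟩
    _ ≤ ∑ z, μ (W ⁻¹' ((fun w => (w, z)) ⁻¹' A)) := measure_iUnion_fintype_le _ _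
    _ = _ := by simp_rw [Measure.map_apply hW (hsec _)]

theorem statement1 {Ω S 𝒲 : Type*} [MeasurableSpace Ω] [MeasurableSpace S] [MeasurableSpace 𝒲]
    (m u : ℕ) (hm : 1 ≤ m) (hu : 1 ≤ u)
    (s : Fin (m + u) → S) (B : ℝ) (hB : 0 < B)
    (ℓ : 𝒲 → S → ℝ) (hℓmeas : Measurable fun p : 𝒲 × S => ℓ p.1 p.2)
    (hℓ : ∀ (w : 𝒲) (i : Fin (m + u)), 0 ≤ ℓ w (s i) ∧ ℓ w (s i) ≤ B)
    (μ : Measure Ω) [IsProbabilityMeasure μ]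
    (W : Ω → 𝒲) (Z : Ω → Equiv.Perm (Fin (m + u)))
    (hW : Measurable W) (hZ : Measurable Z)
    (hZunif : Measure.map Z μ = uniformPerm (m + u))
    (hac : Measure.map (fun ω => (W ω, Z ω)) μ ≪ (Measure.map W μ).prod (Measure.map Z μ)) :
    ∫ ω, (Rtest m u s ℓ (W ω) (Z ω) - Rtrain m u s ℓ (W ω) (Z ω)) ^ 2 ∂μ
      ≤ B ^ 2 * Cmu m u * (mutInfo μ W Z + Real.log 3) * ((m : ℝ) + u) / (m * u) := by
  have hm' : (0 : ℝ) < m := by exact_mod_cast hm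
  have hu' : (0 : ℝ) < u := by exact_mod_cast hu
  have hC := Cmu_pos m u hm
  set c : ℝ := m * u / (B ^ 2 * Cmu m u * (m + u)) with hc
  have hcpos : 0 < c := by positivity
  set F : 𝒲 × Equiv.Perm (Fin (m + u)) → ℝ := fun p =>
    (Rtest m u s ℓ p.1 p.2 - Rtrain m u s ℓ p.1 p.2) ^ 2 with hF
  have := Measure.isProbabilityMeasure_map (μ := μ) hW.aemeasurable
  have := Measure.isProbabilityMeasure_map (μ := μ) hZ.aemeasurable
  have := Measure.isProbabilityMeasure_map (μ := μ) (hW.prodMk hZ).aemeasurable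
  set P := Measure.map (fun ω => (W ω, Z ω)) μ with hP
  set Q := (Measure.map W μ).prod (Measure.map Z μ) with hQ
  have hFmeas : Measurable F := by
    refine measurable_from_prod_countable_left fun z => ?_
    have hl : ∀ x : S, Measurable fun w => ℓ w x := fun x => hℓmeas.comp measurable_prodMk_right
    simp only [hF, Rtest, Rtrain]
    refine Measurable.pow_const (Measurable.sub (Measurable.div_const ?_ _)
      (Measurable.div_const ?_ _)) _
    all_goals
      refine Finset.measurable_sum _ fun i _ => ?_
      split_ifs
      · exact hl _
      · exact measurable_const
  have hmoment : ∀ w, ∑ z : Equiv.Perm (Fin (m + u)), exp (c * F (w, z)) ≤ 3 * (m + u).factorial := by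
    intro w
    refine sum_exp_sq_le (fun z : Equiv.Perm (Fin (m + u)) => Rtest m u s ℓ w z - Rtrain m u s ℓ w z)
      _ _ c (by positivity) hcpos.le ?_
      (sum_perm_exp_gap_le m u hm hu B (fun i => ℓ w (s i)) (hℓ w))
    have h := permVar_le_Cmu m u hm hu
    have e : c * (((m : ℝ) + u) ^ 2 / (m * u) ^ 2 * B ^ 2 / 4 * permVar u m) =
        permVar u m * (m + u) / (4 * Cmu m u * (m * u)) := by
      rw [hc]; field_simp
    rw [e, div_le_iff₀ (by positivity)]
    linarith
  have hcF : ∀ p, ‖exp (c * F p)‖ ≤ 3 * (m + u).factorial := fun p => by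
    rw [norm_of_nonneg (exp_pos _).le]
    exact (Finset.single_le_sum (f := fun z => exp (c * F (p.1, z)))
      (fun _ _ => (exp_pos _).le) (Finset.mem_univ p.2)).trans (hmoment p.1)
  have hexpQ : Integrable (fun p => exp (c * F p)) Q :=
    Integrable.of_bound (by fun_prop) _ (ae_of_all _ hcF)
  have hintP : Integrable (fun p => c * F p) P := by
    refine Integrable.of_bound (C := 3 * (m + u).factorial) (by fun_prop) (ae_of_all _ fun p => ?_)
    rw [norm_of_nonneg (mul_nonneg hcpos.le (sq_nonneg _))]
    have := hcF p
    rw [norm_of_nonneg (exp_pos _).le] at this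
    linarith [add_one_le_exp (c * F p)]
  have hQle : ∫ p, exp (c * F p) ∂Q ≤ 3 := by
    rw [hQ, integral_prod _ hexpQ]
    have hin : ∀ w, ∫ z, exp (c * F (w, z)) ∂(Measure.map Z μ) ≤ 3 := by
      intro w
      rw [integral_fintype .of_finite, hZunif]
      simp only [Measure.real, uniformPerm_singleton, smul_eq_mul, ENNReal.toReal_inv,
        ENNReal.toReal_natCast]
      rw [← Finset.mul_sum, inv_mul_le_iff₀ (by positivity), mul_comm]
      exact hmoment w
    calc _ ≤ ∫ _, (3 : ℝ) ∂(Measure.map W μ) :=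
          integral_mono hexpQ.integral_prod_left (integrable_const _) hin
      _ = 3 := by simp
  have hllr : Integrable (llr P Q) P := integrable_llr_of_le_smul P Q hac _
    (joint_le_smul_prod (m + u) μ W Z hW hZ hZunif)
  have hDV := donsker_varadhan P Q hac hllr _ hintP hexpQ
  have hlog : log (∫ p, exp (c * F p) ∂Q) ≤ log 3 :=
    log_le_log (integral_exp_pos hexpQ) hQle
  rw [integral_const_mul, hP, integral_map (hW.prodMk hZ).aemeasurable
    hFmeas.aestronglyMeasurable] at hDV
  have hfin : c * ∫ ω, F (W ω, Z ω) ∂μ ≤ mutInfo μ W Z + log 3 := hDV.trans (by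
    rw [mutInfo]; gcongr)
  rw [mul_comm, ← le_div_iff₀ hcpos] at hfin
  refine hfin.trans (le_of_eq ?_)
  rw [hc]
  field_simp

end
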